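/- Let q ∈ ℂ with 0 < |q| < 1 and let x ∈ ℂ with |x| < 1. Assume the family (i,j) ↦ (-1)^{i-j} q^{(i-j)^2} x^j / ((q^2;q^2)_i (q^2;q^2)_j) indexed by ℕ×ℕ is absolutely summable. Then ∑_{i,j≥0} (-1)^{i-j} q^{(i-j)^2} x^j / ((q^2;q^2)_i (q^2;q^2)_j) = (q;q^2)_∞ · (xq;q^2)_∞ / (x;q^2)_∞. -/

import Mathlib

/-!
Let `F(z) = (az;Q)_∞ / (bz;Q)_∞`. Comparing coefficients in `(1 - bz) F(z) = (1 - az) F(Qz)` gives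
the power series of `F`: the case `b = 1` is the `q`-binomial theorem, and the case `b = 0` is
Euler's expansion of `(az;Q)_∞`. In the double series, weighted by `y ^ (i - j)`, Euler's expansion
with base `q²` evaluates the sum over `i` as a multiple of
`(y q^{1-2j};q²)_∞ = (y q^{1-2j};q²)_j (qy;q²)_∞`. Reversing the finite product turns it into
`(q/y;q²)_j`, and the remaining sum over `j` is an instance of the `q`-binomial theorem.
-/

/-- The finite q-shifted factorial with base `Q`: `(a;Q)_n = ∏_{k=0}^{n-1} (1 - a Q^k)`. -/
noncomputable def qPoch (a q : ℂ) (n : ℕ) : ℂ := ∏ k ∈ Finset.range n, (1 - a * q ^ k)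

/-- The infinite q-shifted factorial `(a;Q)_∞ = ∏_{k=0}^{∞} (1 - a Q^k)`. -/
noncomputable def qPochInf (a q : ℂ) : ℂ := ∏' k : ℕ, (1 - a * q ^ k)

open Filter Topology

section Pochhammer

variable {a Q : ℂ}

lemma qPoch_zero (a Q : ℂ) : qPoch a Q 0 = 1 := Finset.prod_range_zero _

lemma qPoch_succ (a Q : ℂ) (n : ℕ) : qPoch a Q (n + 1) = qPoch a Q n * (1 - a * Q ^ n) :=
  Finset.prod_range_succ _ n

lemma qPochInf_zero_left (Q : ℂ) : qPochInf 0 Q = 1 := by simp [qPochInf]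

lemma one_sub_mul_pow_ne_zero (hQ : ‖Q‖ ≤ 1) (ha : ‖a‖ < 1) (k : ℕ) : 1 - a * Q ^ k ≠ 0 := by
  have hlt : ‖a * Q ^ k‖ < 1 := by
    rw [norm_mul, norm_pow]
    exact mul_lt_one_of_nonneg_of_lt_one_left (norm_nonneg a) ha
      (pow_le_one₀ (norm_nonneg Q) hQ)
  intro h
  rw [← sub_eq_zero.mp h, norm_one] at hlt
  exact hlt.false

lemma summable_norm_neg_mul_pow (hQ : ‖Q‖ < 1) (a : ℂ) :
    Summable fun k : ℕ ↦ ‖-(a * Q ^ k)‖ := by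
  simp only [norm_neg, norm_mul, norm_pow]
  exact (summable_geometric_of_lt_one (norm_nonneg Q) hQ).mul_left _

lemma multipliable_one_sub_mul_pow (hQ : ‖Q‖ < 1) (a : ℂ) :
    Multipliable fun k : ℕ ↦ 1 - a * Q ^ k := by
  simpa only [sub_eq_add_neg] using
    multipliable_one_add_of_summable (summable_norm_neg_mul_pow hQ a)

lemma tendsto_qPoch (hQ : ‖Q‖ < 1) (a : ℂ) :
    Tendsto (qPoch a Q) atTop (𝓝 (qPochInf a Q)) :=
  (multipliable_one_sub_mul_pow hQ a).hasProd.tendsto_prod_nat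

lemma qPochInf_ne_zero (hQ : ‖Q‖ < 1) (ha : ‖a‖ < 1) : qPochInf a Q ≠ 0 := by
  simpa only [qPochInf, sub_eq_add_neg] using
    tprod_one_add_ne_zero_of_summable
      (fun k ↦ by simpa only [sub_eq_add_neg] using one_sub_mul_pow_ne_zero hQ.le ha k)
      (summable_norm_neg_mul_pow hQ a)

lemma qPoch_mul_qPochInf (hQ : ‖Q‖ < 1) (a : ℂ) (n : ℕ) :
    qPoch a Q n * qPochInf (a * Q ^ n) Q = qPochInf a Q := by
  have hshift (k : ℕ) : a * Q ^ n * Q ^ k = a * Q ^ (k + n) := by ring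
  have hmul := multipliable_one_sub_mul_pow hQ (a * Q ^ n)
  simp only [qPoch, qPochInf, hshift] at hmul ⊢
  exact Multipliable.prod_mul_tprod_nat_mul' (f := fun k ↦ 1 - a * Q ^ k) hmul

lemma prod_range_pow_eq_pow_choose_two (Q : ℂ) (n : ℕ) :
    ∏ k ∈ Finset.range n, Q ^ k = Q ^ n.choose 2 := by
  rw [Finset.prod_pow_eq_pow_sum, Finset.sum_range_id, Nat.choose_two_right]

lemma qPoch_eq_mul_qPoch_reflect (hQ : Q ≠ 0) (ha : a ≠ 0) (n : ℕ) :
    qPoch a Q n = (-a) ^ n * Q ^ n.choose 2 * qPoch (a⁻¹ * Q ^ (1 - n : ℤ)) Q n := by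
  have hfactor : ∀ k ∈ Finset.range n,
      1 - a * Q ^ k = -a * Q ^ k * (1 - a⁻¹ * Q ^ (1 - n : ℤ) * Q ^ (n - 1 - k)) := by
    intro k hk
    have hpow : Q ^ k * (Q ^ (1 - n : ℤ) * Q ^ (n - 1 - k)) = 1 := by
      have hk := Finset.mem_range.mp hk
      rw [← zpow_natCast, ← zpow_natCast, ← zpow_add₀ hQ, ← zpow_add₀ hQ]
      convert zpow_zero Q using 2
      lia
    linear_combination -(a * a⁻¹) * hpow - mul_inv_cancel₀ ha
  rw [qPoch, Finset.prod_congr rfl hfactor, Finset.prod_mul_distrib, Finset.prod_mul_distrib,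
    Finset.prod_const, Finset.card_range, prod_range_pow_eq_pow_choose_two,
    Finset.prod_range_reflect fun k ↦ 1 - a⁻¹ * Q ^ (1 - n : ℤ) * Q ^ k, qPoch]

end Pochhammer

section QBinomial

/-- The coefficient of `z ^ n` in the expansion of `(az;Q)_∞ / (bz;Q)_∞`. This is the homogeneous
form of the coefficient `(a;Q)_n / (Q;Q)_n` of the `q`-binomial theorem, to which it reduces for
`b = 1`; it also makes sense for `b = 0`, where it gives Euler's expansion of `(az;Q)_∞`. -/
noncomputable def qBinomCoeff (b a Q : ℂ) (n : ℕ) : ℂ :=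
  ∏ k ∈ Finset.range n, ((b - a * Q ^ k) / (1 - Q * Q ^ k))

/-- The power series `∑ n, qBinomCoeff b a Q n * z ^ n`, which the homogeneous `q`-binomial theorem
identifies with `(az;Q)_∞ / (bz;Q)_∞` for `‖b * z‖ < 1`. -/
noncomputable def qBinomSeries (b a Q z : ℂ) : ℂ := ∑' n, qBinomCoeff b a Q n * z ^ n

variable {a b Q z : ℂ}

lemma qBinomCoeff_zero (b a Q : ℂ) : qBinomCoeff b a Q 0 = 1 := Finset.prod_range_zero _

lemma qBinomCoeff_succ (b a Q : ℂ) (n : ℕ) :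
    qBinomCoeff b a Q (n + 1) = qBinomCoeff b a Q n * ((b - a * Q ^ n) / (1 - Q * Q ^ n)) :=
  Finset.prod_range_succ _ n

lemma qBinomCoeff_succ_mul_one_sub (b a : ℂ) {n : ℕ} (hn : 1 - Q * Q ^ n ≠ 0) :
    qBinomCoeff b a Q (n + 1) * (1 - Q * Q ^ n) = qBinomCoeff b a Q n * (b - a * Q ^ n) := by
  rw [qBinomCoeff_succ, mul_assoc, div_mul_cancel₀ _ hn]

lemma qBinomCoeff_one (a Q : ℂ) (n : ℕ) : qBinomCoeff 1 a Q n = qPoch a Q n / qPoch Q Q n :=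
  Finset.prod_div_distrib ..

lemma qBinomCoeff_zero_one (Q : ℂ) (n : ℕ) :
    qBinomCoeff 0 1 Q n = (-1) ^ n * Q ^ n.choose 2 / qPoch Q Q n := by
  simp only [qBinomCoeff, zero_sub, one_mul, Finset.prod_div_distrib, Finset.prod_neg,
    Finset.card_range, prod_range_pow_eq_pow_choose_two, qPoch]

lemma tendsto_sub_mul_pow_div_one_sub_mul_pow (hQ : ‖Q‖ < 1) (b a : ℂ) :
    Tendsto (fun n : ℕ ↦ (b - a * Q ^ n) / (1 - Q * Q ^ n)) atTop (𝓝 b) := by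
  have hpow := tendsto_pow_atTop_nhds_zero_of_norm_lt_one hQ
  have hnum : Tendsto (fun n : ℕ ↦ b - a * Q ^ n) atTop (𝓝 b) := by
    simpa using (hpow.const_mul a).const_sub b
  have hden : Tendsto (fun n : ℕ ↦ 1 - Q * Q ^ n) atTop (𝓝 1) := by
    simpa using (hpow.const_mul Q).const_sub 1
  have hquot := hnum.div hden one_ne_zero
  rwa [div_one] at hquot

lemma summable_norm_qBinomCoeff_mul_pow (hQ : ‖Q‖ < 1) (hz : ‖b * z‖ < 1) :
    Summable fun n ↦ ‖qBinomCoeff b a Q n * z ^ n‖ := by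
  obtain ⟨r, hr, hr1⟩ := exists_between hz
  refine summable_of_ratio_norm_eventually_le hr1 ?_
  have hlim := ((tendsto_sub_mul_pow_div_one_sub_mul_pow hQ b a).mul_const z).norm
  filter_upwards [hlim.eventually_lt_const hr] with n hn
  have hratio : qBinomCoeff b a Q (n + 1) * z ^ (n + 1) =
      (b - a * Q ^ n) / (1 - Q * Q ^ n) * z * (qBinomCoeff b a Q n * z ^ n) := by
    rw [qBinomCoeff_succ]
    ring
  rw [norm_norm, norm_norm, hratio, norm_mul]
  gcongr

lemma norm_mul_pow_mul_le (hQ : ‖Q‖ ≤ 1) (b z : ℂ) (n : ℕ) : ‖b * (Q ^ n * z)‖ ≤ ‖b * z‖ := by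
  rw [mul_left_comm, norm_mul, norm_pow]
  exact mul_le_of_le_one_left (norm_nonneg _) (pow_le_one₀ (norm_nonneg Q) hQ)

lemma qBinomSeries_functional_equation (hQ : ‖Q‖ < 1) (hz : ‖b * z‖ < 1) :
    (1 - b * z) * qBinomSeries b a Q z = (1 - a * z) * qBinomSeries b a Q (Q * z) := by
  have hQz : ‖b * (Q * z)‖ < 1 := by simpa using (norm_mul_pow_mul_le hQ.le b z 1).trans_lt hz
  have hs : Summable fun n ↦ qBinomCoeff b a Q n * z ^ n :=
    (summable_norm_qBinomCoeff_mul_pow hQ hz).of_norm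
  have hsQ : Summable fun n ↦ qBinomCoeff b a Q n * (Q * z) ^ n :=
    (summable_norm_qBinomCoeff_mul_pow hQ hQz).of_norm
  have hcoeff (n : ℕ) :
      qBinomCoeff b a Q (n + 1) * z ^ (n + 1) - qBinomCoeff b a Q (n + 1) * (Q * z) ^ (n + 1) =
        z * (b * (qBinomCoeff b a Q n * z ^ n) - a * (qBinomCoeff b a Q n * (Q * z) ^ n)) := by
    linear_combination z ^ (n + 1) * qBinomCoeff_succ_mul_one_sub b a
      (one_sub_mul_pow_ne_zero hQ.le hQ n)
  have hdiff : qBinomSeries b a Q z - qBinomSeries b a Q (Q * z) =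
      z * (b * qBinomSeries b a Q z - a * qBinomSeries b a Q (Q * z)) := by
    simp only [qBinomSeries]
    rw [← hs.tsum_sub hsQ, (hs.sub hsQ).tsum_eq_zero_add, ← tsum_mul_left, ← tsum_mul_left,
      ← (hs.mul_left b).tsum_sub (hsQ.mul_left a), ← tsum_mul_left, pow_zero, pow_zero, sub_self,
      zero_add]
    exact tsum_congr hcoeff
  linear_combination hdiff

lemma qPoch_mul_qBinomSeries (hQ : ‖Q‖ < 1) (hz : ‖b * z‖ < 1) (n : ℕ) :
    qPoch (b * z) Q n * qBinomSeries b a Q z =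
      qPoch (a * z) Q n * qBinomSeries b a Q (Q ^ n * z) := by
  induction n with
  | zero => simp only [qPoch_zero, pow_zero, one_mul]
  | succ n ih =>
    have hstep := qBinomSeries_functional_equation (a := a) hQ
      ((norm_mul_pow_mul_le hQ.le b z n).trans_lt hz)
    rw [qPoch_succ, qPoch_succ, pow_succ', mul_assoc Q]
    linear_combination (1 - b * z * Q ^ n) * ih + qPoch (a * z) Q n * hstep

lemma qBinomSeries_zero (b a Q : ℂ) : qBinomSeries b a Q 0 = 1 := by
  rw [qBinomSeries, tsum_eq_single 0 fun n hn ↦ by rw [zero_pow hn, mul_zero], pow_zero, mul_one,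
    qBinomCoeff_zero]

lemma tendsto_qBinomSeries_pow_mul (hQ : ‖Q‖ < 1) (hz : ‖b * z‖ < 1) :
    Tendsto (fun n : ℕ ↦ qBinomSeries b a Q (Q ^ n * z)) atTop (𝓝 1) := by
  rw [← qBinomSeries_zero b a Q]
  refine tendsto_tsum_of_dominated_convergence
    (summable_norm_qBinomCoeff_mul_pow (a := a) hQ hz) (fun i ↦ ?_) (.of_forall fun n i ↦ ?_)
  · have hpow := (tendsto_pow_atTop_nhds_zero_of_norm_lt_one hQ).mul_const z
    rw [zero_mul] at hpow
    exact (hpow.pow i).const_mul _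
  · rw [norm_mul, norm_mul, norm_pow, norm_pow]
    gcongr
    simpa only [one_mul] using norm_mul_pow_mul_le hQ.le 1 z n

theorem qPochInf_mul_qBinomSeries (hQ : ‖Q‖ < 1) (hz : ‖b * z‖ < 1) :
    qPochInf (b * z) Q * qBinomSeries b a Q z = qPochInf (a * z) Q := by
  have hleft := (tendsto_qPoch hQ (b * z)).mul_const (qBinomSeries b a Q z)
  have hright := (tendsto_qPoch hQ (a * z)).mul (tendsto_qBinomSeries_pow_mul (a := a) hQ hz)
  rw [mul_one] at hright
  exact tendsto_nhds_unique hleft (hright.congr fun n ↦ (qPoch_mul_qBinomSeries hQ hz n).symm)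

theorem tsum_qPoch_div_qPoch_mul_pow (hQ : ‖Q‖ < 1) (hz : ‖z‖ < 1) (a : ℂ) :
    ∑' n, qPoch a Q n / qPoch Q Q n * z ^ n = qPochInf (a * z) Q / qPochInf z Q := by
  have hprod := qPochInf_mul_qBinomSeries (a := a) (b := 1) hQ (by rwa [one_mul])
  simp only [qBinomSeries, qBinomCoeff_one, one_mul] at hprod
  rw [eq_div_iff (qPochInf_ne_zero hQ hz), mul_comm, hprod]

theorem tsum_neg_one_pow_mul_pow_choose_two_div_qPoch_mul_pow (hQ : ‖Q‖ < 1) (z : ℂ) :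
    ∑' n : ℕ, (-1) ^ n * Q ^ n.choose 2 / qPoch Q Q n * z ^ n = qPochInf z Q := by
  have hprod := qPochInf_mul_qBinomSeries (a := 1) (b := 0) (z := z) hQ (by simp)
  simpa only [qBinomSeries, qBinomCoeff_zero_one, zero_mul, qPochInf_zero_left, one_mul]
    using hprod

end QBinomial

section DoubleSeries

variable {q x y : ℂ}

lemma sq_pow_choose_two (q : ℂ) (n : ℕ) : (q ^ 2) ^ n.choose 2 = q ^ ((n : ℤ) ^ 2 - n) := by
  have hexp : ((2 * n.choose 2 : ℕ) : ℤ) = (n : ℤ) ^ 2 - n := by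
    induction n with
    | zero => simp
    | succ n ih =>
      rw [Nat.choose_succ_succ', Nat.choose_one_right]
      push_cast at ih ⊢
      linarith
  rw [← pow_mul, ← zpow_natCast, hexp]

lemma neg_zpow_sub_mul_zpow_sq_sub (hq : q ≠ 0) (hy : y ≠ 0) (i j : ℕ) :
    (-y) ^ ((i : ℤ) - j) * q ^ (((i : ℤ) - j) ^ 2) =
      q ^ ((j : ℤ) ^ 2) / (-y) ^ j *
        ((-1) ^ i * (q ^ 2) ^ i.choose 2 * (y * q ^ (1 - 2 * j : ℤ)) ^ i) := by
  have hexp : q ^ (((i : ℤ) - j) ^ 2) =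
      q ^ ((j : ℤ) ^ 2) * (q ^ ((i : ℤ) ^ 2 - i) * (q ^ (1 - 2 * j : ℤ)) ^ i) := by
    rw [← zpow_natCast (q ^ (1 - 2 * j : ℤ)), ← zpow_mul, ← zpow_add₀ hq, ← zpow_add₀ hq]
    ring_nf
  rw [hexp, sq_pow_choose_two, zpow_sub₀ (neg_ne_zero.mpr hy), zpow_natCast, zpow_natCast,
    neg_pow y i, mul_pow]
  ring

lemma qPoch_sq_reflect (hq : q ≠ 0) (hy : y ≠ 0) (j : ℕ) :
    q ^ ((j : ℤ) ^ 2) / (-y) ^ j * qPoch (y * q ^ (1 - 2 * j : ℤ)) (q ^ 2) j =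
      qPoch (q / y) (q ^ 2) j := by
  have hbase : (q / y)⁻¹ * (q ^ 2) ^ (1 - j : ℤ) = y * q ^ (1 - 2 * j : ℤ) := by
    rw [← zpow_natCast q 2, ← zpow_mul, inv_div, div_mul_eq_mul_div, mul_div_assoc,
      div_eq_mul_inv, ← zpow_sub_one₀ hq]
    push_cast
    ring_nf
  have hcoeff : (-(q / y)) ^ j * (q ^ 2) ^ j.choose 2 = q ^ ((j : ℤ) ^ 2) / (-y) ^ j := by
    rw [sq_pow_choose_two, zpow_sub₀ hq, zpow_natCast, ← div_neg, div_pow]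
    field_simp
  rw [qPoch_eq_mul_qPoch_reflect (pow_ne_zero 2 hq) (div_ne_zero hq hy), hbase, hcoeff]

lemma tsum_neg_zpow_mul_zpow_sq_div_qPoch (hq : q ≠ 0) (hQ : ‖q ^ 2‖ < 1) (hy : y ≠ 0) (j : ℕ) :
    ∑' i : ℕ, (-y) ^ ((i : ℤ) - j) * q ^ (((i : ℤ) - j) ^ 2) / qPoch (q ^ 2) (q ^ 2) i =
      qPochInf (q * y) (q ^ 2) * qPoch (q / y) (q ^ 2) j := by
  have hshift : y * q ^ (1 - 2 * j : ℤ) * (q ^ 2) ^ j = q * y := by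
    rw [← pow_mul, ← zpow_natCast q (2 * j), mul_assoc, ← zpow_add₀ hq]
    push_cast
    rw [sub_add_cancel, zpow_one, mul_comm]
  calc
    _ = q ^ ((j : ℤ) ^ 2) / (-y) ^ j * qPochInf (y * q ^ (1 - 2 * j : ℤ)) (q ^ 2) := by
      rw [← tsum_neg_one_pow_mul_pow_choose_two_div_qPoch_mul_pow hQ, ← tsum_mul_left]
      refine tsum_congr fun i ↦ ?_
      rw [neg_zpow_sub_mul_zpow_sq_sub hq hy]
      ring
    _ = qPochInf (q * y) (q ^ 2) * qPoch (q / y) (q ^ 2) j := by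
      rw [← qPoch_mul_qPochInf hQ _ j, hshift, ← mul_assoc, qPoch_sq_reflect hq hy, mul_comm]

theorem stmt9_general (hq : q ≠ 0) (hq1 : ‖q‖ < 1) (hy : y ≠ 0) (hx : ‖x‖ < 1)
    (hsum : Summable fun p : ℕ × ℕ ↦ (-y) ^ ((p.1 : ℤ) - (p.2 : ℤ)) *
      q ^ (((p.1 : ℤ) - (p.2 : ℤ)) ^ 2) * x ^ p.2 /
      (qPoch (q ^ 2) (q ^ 2) p.1 * qPoch (q ^ 2) (q ^ 2) p.2)) :
    ∑' p : ℕ × ℕ, (-y) ^ ((p.1 : ℤ) - (p.2 : ℤ)) *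
      q ^ (((p.1 : ℤ) - (p.2 : ℤ)) ^ 2) * x ^ p.2 /
      (qPoch (q ^ 2) (q ^ 2) p.1 * qPoch (q ^ 2) (q ^ 2) p.2) =
    qPochInf (q * y) (q ^ 2) * qPochInf (x * q / y) (q ^ 2) / qPochInf x (q ^ 2) := by
  have hQ : ‖q ^ 2‖ < 1 := by
    rw [norm_pow]
    exact pow_lt_one₀ (norm_nonneg q) hq1 two_ne_zero
  have hrow (j : ℕ) : ∑' i : ℕ, (-y) ^ ((i : ℤ) - j) * q ^ (((i : ℤ) - j) ^ 2) * x ^ j /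
      (qPoch (q ^ 2) (q ^ 2) i * qPoch (q ^ 2) (q ^ 2) j) =
      qPochInf (q * y) (q ^ 2) *
        (qPoch (q / y) (q ^ 2) j / qPoch (q ^ 2) (q ^ 2) j * x ^ j) := by
    simp only [mul_div_mul_comm _ (x ^ j)]
    rw [tsum_mul_right, tsum_neg_zpow_mul_zpow_sq_div_qPoch hq hQ hy]
    ring
  calc
    _ = ∑' j : ℕ, qPochInf (q * y) (q ^ 2) *
        (qPoch (q / y) (q ^ 2) j / qPoch (q ^ 2) (q ^ 2) j * x ^ j) :=
      ((Equiv.prodComm ℕ ℕ).tsum_eq _).symm.trans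
        (hsum.prod_symm.tsum_prod.trans (tsum_congr hrow))
    _ = qPochInf (q * y) (q ^ 2) * qPochInf (x * q / y) (q ^ 2) / qPochInf x (q ^ 2) := by
      rw [tsum_mul_left, tsum_qPoch_div_qPoch_mul_pow hQ hx, mul_comm (q / y),
        ← mul_div_assoc x, ← mul_div_assoc]

end DoubleSeries

theorem stmt9 (q : ℂ) (hq0 : 0 < ‖q‖) (hq1 : ‖q‖ < 1)
    (x : ℂ) (hx : ‖x‖ < 1)
    (h1 : Summable (fun p : ℕ × ℕ => ‖(-1 : ℂ) ^ ((p.1 : ℤ) - (p.2 : ℤ)) *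
      q ^ (((p.1 : ℤ) - (p.2 : ℤ)) ^ 2) * x ^ p.2 /
      (qPoch (q ^ 2) (q ^ 2) p.1 * qPoch (q ^ 2) (q ^ 2) p.2)‖)) :
    ∑' p : ℕ × ℕ, (-1 : ℂ) ^ ((p.1 : ℤ) - (p.2 : ℤ)) *
      q ^ (((p.1 : ℤ) - (p.2 : ℤ)) ^ 2) * x ^ p.2 /
      (qPoch (q ^ 2) (q ^ 2) p.1 * qPoch (q ^ 2) (q ^ 2) p.2)
    = qPochInf q (q ^ 2) * qPochInf (x * q) (q ^ 2) / qPochInf x (q ^ 2) := by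
  simpa only [mul_one, div_one] using
    stmt9_general (norm_pos_iff.mp hq0) hq1 one_ne_zero hx h1.of_norm
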